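/- Define β(ℓ) = 4 ∫₀^∞ u² Φ(−ℓu/√2) φ(u) du and g(ℓ) = ℓ²β(ℓ) for ℓ > 0. Then there exists ℓ_opt ∈ [1.713, 1.717] such that g(ℓ_opt) ≥ g(ℓ) for all ℓ > 0 (namely ℓ_opt = 2.426/√2 up to three decimal places), and for this ℓ_opt the acceptance rate 4 ∫₀^∞ Φ(−ℓ_opt u/√2) φ(u) du lies in [0.4385, 0.4395]. -/

import Mathlib

/-!
Put `s = ℓ / √2`. Both integrals have the form `∫₀^∞ uⁿ Φ(-su) φ(u) du` (`mixedMoment`).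
Differentiating in `s` under the integral sign turns `Φ(-su)` into `-u φ(su)`, and the resulting
Gaussian moment is rational in `s`; together with the value at `s = 0` this gives the closed forms

* `∫₀^∞ Φ(-su) φ(u) du = 1/4 - arctan s / (2π)` (`mixedMoment_zero_eq`),
* `∫₀^∞ u² Φ(-su) φ(u) du = (π/2 - arctan s - s/(1+s²)) / (2π)` (`mixedMoment_two_eq`).

Hence the speed is `(4/π) s² (π/2 - arctan s - s/(1+s²))`, whose derivative has the sign of
`k(s) = π/2 - arctan s - s/(1+s²) - s/(1+s²)²` (`critFn`). Since `k` has derivative `(s²-3)/(1+s²)³`, the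
function `k` decreases on `[0, √3]` and then increases to its limit `0`, so it is nonpositive
on `[√3, ∞)`. A zero of `k` in `[0, √3]` is therefore a global maximiser (`reducedSpeed_le`).
Taylor bounds for `arctan` near `0`, after a shift by `π/4`, locate such a zero in
`[1.2113, 1.2141]` (`exists_critFn_zero`) and bound the acceptance rate
`1 - (2/π) arctan s` there (`rate_mem`).
-/

open MeasureTheory ProbabilityTheory

/-- The standard normal cumulative distribution function `Φ`. -/
noncomputable def stdNormalCDF (x : ℝ) : ℝ := cdf (gaussianReal 0 1) x

/-- The standard normal density `φ`. -/
noncomputable def stdNormalPDF (x : ℝ) : ℝ := gaussianPDFReal 0 1 x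

/-- `β(ℓ) = 4 ∫₀^∞ u² Φ(−ℓu/√2) φ(u) du`. -/
noncomputable def betaFn (ℓ : ℝ) : ℝ :=
  4 * ∫ u in Set.Ioi (0 : ℝ),
    u ^ 2 * stdNormalCDF (-(ℓ * u) / Real.sqrt 2) * stdNormalPDF u

/-- The diffusion speed of additive TMCMC in the dependent (Gaussian-measure) set-up:
`g(ℓ) = ℓ²β(ℓ)`. -/
noncomputable def tmcmcDepSpeed (ℓ : ℝ) : ℝ := ℓ ^ 2 * betaFn ℓ

/-! ### The standard normal density and distribution function -/

lemma stdNormalPDF_eq (x : ℝ) :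
    stdNormalPDF x = (Real.sqrt (2 * Real.pi))⁻¹ * Real.exp (-(1 / 2) * x ^ 2) := by
  simp only [stdNormalPDF, gaussianPDFReal_def, NNReal.coe_one, mul_one, sub_zero]
  congr 2
  ring

lemma continuous_stdNormalPDF : Continuous stdNormalPDF := by
  have : stdNormalPDF =
      fun x => (Real.sqrt (2 * Real.pi))⁻¹ * Real.exp (-(1 / 2) * x ^ 2) :=
    funext stdNormalPDF_eq
  rw [this]
  fun_prop

lemma stdNormalPDF_nonneg (x : ℝ) : 0 ≤ stdNormalPDF x := gaussianPDFReal_nonneg 0 1 x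

lemma stdNormalPDF_le_one (x : ℝ) : stdNormalPDF x ≤ 1 := by
  rw [stdNormalPDF_eq]
  have h1 : (1 : ℝ) ≤ Real.sqrt (2 * Real.pi) := by
    rw [Real.one_le_sqrt]
    linarith [Real.pi_gt_three]
  have h2 : Real.exp (-(1 / 2) * x ^ 2) ≤ 1 := by
    rw [Real.exp_le_one_iff]
    nlinarith [sq_nonneg x]
  exact mul_le_one₀ (inv_le_one_of_one_le₀ h1) (Real.exp_pos _).le h2

lemma integrable_stdNormalPDF : Integrable stdNormalPDF := integrable_gaussianPDFReal 0 1

lemma stdNormalCDF_eq (x : ℝ) : stdNormalCDF x = ∫ t in Set.Iic x, stdNormalPDF t := by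
  rw [stdNormalCDF, cdf_eq_real, measureReal_def,
    gaussianReal_apply_eq_integral 0 one_ne_zero, ENNReal.toReal_ofReal]
  · rfl
  · exact integral_nonneg fun t => stdNormalPDF_nonneg t

lemma hasDerivAt_stdNormalCDF (x : ℝ) : HasDerivAt stdNormalCDF (stdNormalPDF x) x := by
  have hfun : stdNormalCDF =
      fun y => (∫ t in (0 : ℝ)..y, stdNormalPDF t) + ∫ t in Set.Iic 0, stdNormalPDF t := by
    funext y
    rw [← intervalIntegral.integral_Iic_sub_Iic integrable_stdNormalPDF.integrableOn
      integrable_stdNormalPDF.integrableOn, stdNormalCDF_eq]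
    ring
  rw [hfun]
  exact (intervalIntegral.integral_hasDerivAt_right
    integrable_stdNormalPDF.intervalIntegrable
    (continuous_stdNormalPDF.stronglyMeasurableAtFilter _ _)
    continuous_stdNormalPDF.continuousAt).add_const _

lemma continuous_stdNormalCDF : Continuous stdNormalCDF :=
  continuous_iff_continuousAt.2 fun x => (hasDerivAt_stdNormalCDF x).continuousAt

/-! ### Half-line Gaussian moments -/

lemma integral_pow_mul_exp (n : ℕ) {c : ℝ} (hc : 0 < c) :
    ∫ u in Set.Ioi (0 : ℝ), u ^ n * Real.exp (-c * u ^ 2) =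
      c ^ (-((n : ℝ) + 1) / 2) * (1 / 2) * Real.Gamma (((n : ℝ) + 1) / 2) := by
  have h := integral_rpow_mul_exp_neg_mul_rpow (p := 2) (q := n) two_pos
    (by have : (0 : ℝ) ≤ n := n.cast_nonneg
        linarith) hc
  simpa only [Real.rpow_natCast, Real.rpow_two] using h

lemma integrableOn_pow_mul_stdNormalPDF (n : ℕ) :
    IntegrableOn (fun u => u ^ n * stdNormalPDF u) (Set.Ioi 0) := by
  have h := integrableOn_rpow_mul_exp_neg_mul_sq (b := 1 / 2) (by norm_num) (s := n)
    (by have : (0 : ℝ) ≤ n := n.cast_nonneg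
        linarith)
  simp only [Real.rpow_natCast] at h
  refine IntegrableOn.congr_fun (h.const_mul (Real.sqrt (2 * Real.pi))⁻¹) (fun u _ => ?_)
    measurableSet_Ioi
  simp only [stdNormalPDF_eq]
  ring

lemma integral_pow_mul_stdNormalPDF (n : ℕ) :
    ∫ u in Set.Ioi (0 : ℝ), u ^ n * stdNormalPDF u =
      (Real.sqrt (2 * Real.pi))⁻¹ *
        ((1 / 2 : ℝ) ^ (-((n : ℝ) + 1) / 2) * (1 / 2) * Real.Gamma (((n : ℝ) + 1) / 2)) := by
  rw [← integral_pow_mul_exp n (by norm_num : (0 : ℝ) < 1 / 2), ← integral_const_mul]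
  congr 1
  funext u
  rw [stdNormalPDF_eq]
  ring

lemma integral_stdNormalPDF_Ioi : ∫ u in Set.Ioi (0 : ℝ), stdNormalPDF u = 1 / 2 := by
  have h := integral_gaussian_Ioi (1 / 2)
  simp only [stdNormalPDF_eq]
  rw [integral_const_mul, h]
  have h2 : Real.pi / (1 / 2) = 2 * Real.pi := by ring
  rw [h2]
  have : Real.sqrt (2 * Real.pi) ≠ 0 := by positivity
  field_simp

lemma integral_sq_mul_stdNormalPDF_Ioi :
    ∫ u in Set.Ioi (0 : ℝ), u ^ 2 * stdNormalPDF u = 1 / 2 := by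
  rw [integral_pow_mul_stdNormalPDF]
  have h1 : Real.Gamma (((2 : ℕ) + 1 : ℝ) / 2) = 1 / 2 * Real.sqrt Real.pi := by
    have : (((2 : ℕ) + 1 : ℝ) / 2) = 1 / 2 + 1 := by norm_num
    rw [this, Real.Gamma_add_one (by norm_num), Real.Gamma_one_half_eq]
  have h2 : (1 / 2 : ℝ) ^ (-(((2 : ℕ) : ℝ) + 1) / 2) = 2 * Real.sqrt 2 := by
    rw [one_div, Real.inv_rpow (by norm_num), ← Real.rpow_neg (by norm_num)]
    have : (-(-(((2 : ℕ) : ℝ) + 1) / 2)) = 1 + 1 / 2 := by norm_num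
    rw [this, Real.rpow_add (by norm_num), Real.rpow_one, ← Real.sqrt_eq_rpow]
  rw [h1, h2, Real.sqrt_mul (by norm_num)]
  have h3 : Real.sqrt 2 ≠ 0 := by positivity
  have h4 : Real.sqrt Real.pi ≠ 0 := by positivity
  field_simp

lemma stdNormalCDF_zero : stdNormalCDF 0 = 1 / 2 := by
  rw [stdNormalCDF_eq, ← integral_stdNormalPDF_Ioi]
  have h := integral_comp_neg_Iic (0 : ℝ) stdNormalPDF
  rw [neg_zero] at h
  rw [← h]
  congr 1
  funext u
  simp only [stdNormalPDF_eq, neg_sq]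

/-! ### Closed forms of the two integrals -/

/-- The moment integral `∫₀^∞ uⁿ Φ(-su) φ(u) du`. It is the acceptance rate up to a factor `4`
for `n = 0`, and `β(ℓ)` up to the same factor for `n = 2`, with `s = ℓ / √2`. -/
noncomputable def mixedMoment (n : ℕ) (s : ℝ) : ℝ :=
  ∫ u in Set.Ioi (0 : ℝ), u ^ n * stdNormalCDF (-(s * u)) * stdNormalPDF u

/-- Differentiation under the integral sign; the derivative of the integrand is dominated by
`u ^ (n + 1) * φ u`, uniformly in `s`, because `φ ≤ 1`. -/
lemma hasDerivAt_mixedMoment (n : ℕ) (s : ℝ) :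
    HasDerivAt (mixedMoment n)
      (∫ u in Set.Ioi (0 : ℝ), -(u ^ (n + 1) * stdNormalPDF (s * u) * stdNormalPDF u)) s := by
  have hmeas (x : ℝ) : Continuous
      (fun u => u ^ n * stdNormalCDF (-(x * u)) * stdNormalPDF u) :=
    ((continuous_id.pow n).mul
      (continuous_stdNormalCDF.comp (by fun_prop))).mul continuous_stdNormalPDF
  have hmeas' : Continuous
      (fun u => -(u ^ (n + 1) * stdNormalPDF (s * u) * stdNormalPDF u)) :=
    (((continuous_id.pow (n + 1)).mul
      (continuous_stdNormalPDF.comp (by fun_prop))).mul continuous_stdNormalPDF).neg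
  refine (hasDerivAt_integral_of_dominated_loc_of_deriv_le
    (μ := volume.restrict (Set.Ioi (0 : ℝ)))
    (F := fun x u => u ^ n * stdNormalCDF (-(x * u)) * stdNormalPDF u)
    (F' := fun x u => -(u ^ (n + 1) * stdNormalPDF (x * u) * stdNormalPDF u))
    (bound := fun u => u ^ (n + 1) * stdNormalPDF u)
    (Filter.univ_mem (f := nhds s)) (Filter.Eventually.of_forall fun x =>
      (hmeas x).aestronglyMeasurable) ?_ hmeas'.aestronglyMeasurable ?_
    (integrableOn_pow_mul_stdNormalPDF (n + 1)) ?_).2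
  · refine (integrableOn_pow_mul_stdNormalPDF n).mono' (hmeas s).aestronglyMeasurable ?_
    filter_upwards [ae_restrict_mem measurableSet_Ioi] with u hu
    have hu0 : 0 ≤ u ^ n := pow_nonneg (le_of_lt hu) n
    have h0 : 0 ≤ stdNormalCDF (-(s * u)) := cdf_nonneg _ _
    have h1 : stdNormalCDF (-(s * u)) ≤ 1 := cdf_le_one _ _
    have h2 := stdNormalPDF_nonneg u
    rw [Real.norm_of_nonneg (by positivity)]
    exact mul_le_mul_of_nonneg_right (mul_le_of_le_one_right hu0 h1) h2
  · filter_upwards [ae_restrict_mem measurableSet_Ioi] with u hu x _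
    have hu0 : 0 ≤ u ^ (n + 1) := pow_nonneg (le_of_lt hu) _
    have h0 := stdNormalPDF_nonneg (x * u)
    have h1 := stdNormalPDF_le_one (x * u)
    have h2 := stdNormalPDF_nonneg u
    rw [norm_neg, Real.norm_of_nonneg (by positivity)]
    exact mul_le_mul_of_nonneg_right (mul_le_of_le_one_right hu0 h1) h2
  · refine Filter.Eventually.of_forall fun u x _ => ?_
    have hin : HasDerivAt (fun y : ℝ => -(y * u)) (-u) x := by
      simpa using ((hasDerivAt_id x).mul_const u).fun_neg
    have hcomp := (hasDerivAt_stdNormalCDF (-(x * u))).comp x hin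
    have h := (hcomp.const_mul (u ^ n)).mul_const (stdNormalPDF u)
    have heven : stdNormalPDF (-(x * u)) = stdNormalPDF (x * u) := by
      simp only [stdNormalPDF_eq, neg_sq]
    rw [heven] at h
    refine h.congr_deriv ?_
    ring

/-- The product `φ(su)φ(u)` is an unnormalised Gaussian in `u` with precision `1 + s²`. -/
lemma integral_deriv_eq (n : ℕ) (s : ℝ) :
    ∫ u in Set.Ioi (0 : ℝ), -(u ^ n * stdNormalPDF (s * u) * stdNormalPDF u) =
      -((2 * Real.pi)⁻¹ *
        (((1 + s ^ 2) / 2) ^ (-((n : ℝ) + 1) / 2) * (1 / 2) *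
          Real.Gamma (((n : ℝ) + 1) / 2))) := by
  rw [integral_neg, ← integral_pow_mul_exp n (by positivity : (0 : ℝ) < (1 + s ^ 2) / 2),
    ← integral_const_mul]
  congr 2
  funext u
  have hs : (Real.sqrt (2 * Real.pi))⁻¹ * (Real.sqrt (2 * Real.pi))⁻¹ = (2 * Real.pi)⁻¹ := by
    rw [← mul_inv, Real.mul_self_sqrt (by positivity)]
  have he : Real.exp (-((1 + s ^ 2) / 2) * u ^ 2) =
      Real.exp (-(1 / 2) * (s * u) ^ 2) * Real.exp (-(1 / 2) * u ^ 2) := by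
    rw [← Real.exp_add]
    congr 1
    ring
  rw [stdNormalPDF_eq, stdNormalPDF_eq, he, ← hs]
  ring

/-- A function on `ℝ` is determined by its derivative and its value at `0`. -/
lemma eq_of_hasDerivAt_of_zero {f g f' : ℝ → ℝ} (hf : ∀ x, HasDerivAt f (f' x) x)
    (hg : ∀ x, HasDerivAt g (f' x) x) (h0 : f 0 = g 0) (x : ℝ) : f x = g x := by
  have h (y : ℝ) : HasDerivAt (fun z => f z - g z) 0 y := by
    simpa using (hf y).fun_sub (hg y)
  have := is_const_of_deriv_eq_zero (fun y => (h y).differentiableAt) (fun y => (h y).deriv) x 0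
  linarith

lemma mixedMoment_zero_eq (s : ℝ) :
    mixedMoment 0 s = 1 / 4 - Real.arctan s / (2 * Real.pi) := by
  refine eq_of_hasDerivAt_of_zero (f := mixedMoment 0)
    (g := fun s => 1 / 4 - Real.arctan s / (2 * Real.pi))
    (hasDerivAt_mixedMoment 0) (fun x => ?_) ?_ s
  · refine (((Real.hasDerivAt_arctan x).div_const (2 * Real.pi)).const_sub (1 / 4)).congr_deriv ?_
    rw [integral_deriv_eq]
    have h1 : ((((0 + 1 : ℕ) : ℝ)) + 1) / 2 = 1 := by norm_num
    have h2 : (-(((0 + 1 : ℕ) : ℝ) + 1)) / 2 = -1 := by norm_num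
    rw [h1, h2, Real.Gamma_one, Real.rpow_neg_one]
    have : (1 + x ^ 2) ≠ 0 := by positivity
    field_simp
  · simp only [mixedMoment, zero_mul, neg_zero, stdNormalCDF_zero, pow_zero, one_mul,
      Real.arctan_zero, zero_div, sub_zero]
    rw [integral_const_mul, integral_stdNormalPDF_Ioi]
    norm_num

lemma mixedMoment_two_eq (s : ℝ) :
    mixedMoment 2 s = (Real.pi / 2 - Real.arctan s - s / (1 + s ^ 2)) / (2 * Real.pi) := by
  refine eq_of_hasDerivAt_of_zero (f := mixedMoment 2)
    (g := fun s => (Real.pi / 2 - Real.arctan s - s / (1 + s ^ 2)) / (2 * Real.pi))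
    (hasDerivAt_mixedMoment 2) (fun x => ?_) ?_ s
  · have hne : (1 + x ^ 2) ≠ 0 := by positivity
    have hd : HasDerivAt (fun y : ℝ => 1 + y ^ 2) (2 * x) x := by
      simpa using (hasDerivAt_pow 2 x).const_add 1
    refine ((((Real.hasDerivAt_arctan x).const_sub (Real.pi / 2)).sub
      ((hasDerivAt_id x).div hd hne)).div_const (2 * Real.pi)).congr_deriv ?_
    rw [integral_deriv_eq]
    have h1 : ((((2 + 1 : ℕ) : ℝ)) + 1) / 2 = 1 + 1 := by norm_num
    have h2 : (-(((2 + 1 : ℕ) : ℝ) + 1)) / 2 = -((2 : ℕ) : ℝ) := by norm_num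
    rw [h1, h2, Real.Gamma_add_one one_ne_zero, Real.Gamma_one, Real.rpow_neg (by positivity),
      Real.rpow_natCast]
    simp only [id]
    field_simp
    ring
  · simp only [mixedMoment, zero_mul, neg_zero, stdNormalCDF_zero, Real.arctan_zero,
      sub_zero, zero_div]
    have : (fun u : ℝ => u ^ 2 * (1 / 2) * stdNormalPDF u) =
        fun u => (1 / 2) * (u ^ 2 * stdNormalPDF u) := by
      funext u
      ring
    rw [this, integral_const_mul, integral_sq_mul_stdNormalPDF_Ioi]
    field_simp

/-! ### The critical-point equation -/

/-- `k(s) = π/2 - arctan s - s/(1+s²) - s/(1+s²)²`; up to the factor `2s` it is the derivative of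
`s² (π/2 - arctan s - s/(1+s²))`. -/
noncomputable def critFn (s : ℝ) : ℝ :=
  Real.pi / 2 - Real.arctan s - s / (1 + s ^ 2) - s / (1 + s ^ 2) ^ 2

/-- The diffusion speed in the variable `s = ℓ / √2`, up to the factor `4 / π`. -/
noncomputable def reducedSpeed (s : ℝ) : ℝ :=
  s ^ 2 * (Real.pi / 2 - Real.arctan s - s / (1 + s ^ 2))

lemma hasDerivAt_critFn (x : ℝ) :
    HasDerivAt critFn ((x ^ 2 - 3) / (1 + x ^ 2) ^ 3) x := by
  have hne : (1 + x ^ 2) ≠ 0 := by positivity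
  have hd : HasDerivAt (fun y : ℝ => 1 + y ^ 2) (2 * x) x := by
    simpa using (hasDerivAt_pow 2 x).const_add 1
  refine ((((Real.hasDerivAt_arctan x).const_sub (Real.pi / 2)).sub
    ((hasDerivAt_id x).div hd hne)).sub
    ((hasDerivAt_id x).div (hd.pow 2) (pow_ne_zero 2 hne))).congr_deriv ?_
  simp only [id, Pi.pow_apply]
  field_simp
  ring

lemma hasDerivAt_reducedSpeed (x : ℝ) :
    HasDerivAt reducedSpeed (2 * x * critFn x) x := by
  have hne : (1 + x ^ 2) ≠ 0 := by positivity
  have hd : HasDerivAt (fun y : ℝ => 1 + y ^ 2) (2 * x) x := by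
    simpa using (hasDerivAt_pow 2 x).const_add 1
  refine ((hasDerivAt_pow 2 x).mul (((Real.hasDerivAt_arctan x).const_sub (Real.pi / 2)).sub
    ((hasDerivAt_id x).div hd hne))).congr_deriv ?_
  simp only [critFn, id, Pi.sub_apply, Pi.div_apply]
  field_simp
  ring

lemma continuous_critFn : Continuous critFn :=
  continuous_iff_continuousAt.2 fun x => (hasDerivAt_critFn x).continuousAt

lemma antitoneOn_critFn : AntitoneOn critFn (Set.Icc 0 (Real.sqrt 3)) := by
  refine antitoneOn_of_hasDerivWithinAt_nonpos (convex_Icc _ _) continuous_critFn.continuousOn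
    (fun x _ => (hasDerivAt_critFn x).hasDerivWithinAt) fun x hx => ?_
  rw [interior_Icc] at hx
  have : x ^ 2 < 3 := (Real.lt_sqrt hx.1.le).1 hx.2
  exact div_nonpos_of_nonpos_of_nonneg (by linarith) (by positivity)

lemma monotoneOn_critFn : MonotoneOn critFn (Set.Ici (Real.sqrt 3)) := by
  refine monotoneOn_of_hasDerivWithinAt_nonneg (convex_Ici _) continuous_critFn.continuousOn
    (fun x _ => (hasDerivAt_critFn x).hasDerivWithinAt) fun x hx => ?_
  rw [interior_Ici] at hx
  have : 3 < x ^ 2 := (Real.sqrt_lt' (lt_trans (by positivity) hx)).1 hx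
  exact div_nonneg (by linarith) (by positivity)

/-- `critFn` increases to the limit `0` on `[√3, ∞)`, so it is nonpositive there. The proof
only uses the upper bound `critFn s ≤ π/2 - arctan s`, whose right-hand side tends to `0`. -/
lemma critFn_nonpos_of_sqrt_three_le {x : ℝ} (hx : Real.sqrt 3 ≤ x) : critFn x ≤ 0 := by
  have hlim : Filter.Tendsto (fun s => Real.pi / 2 - Real.arctan s) Filter.atTop (nhds 0) := by
    have := (Real.tendsto_arctan_atTop.mono_right nhdsWithin_le_nhds).const_sub (Real.pi / 2)
    simpa using this
  refine ge_of_tendsto hlim ?_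
  filter_upwards [Filter.eventually_ge_atTop x] with y hy
  have h1 := monotoneOn_critFn (Set.mem_Ici.2 hx) (Set.mem_Ici.2 (hx.trans hy)) hy
  have hy0 : 0 ≤ y := (Real.sqrt_nonneg 3).trans (hx.trans hy)
  have h2 : 0 ≤ y / (1 + y ^ 2) := by positivity
  have h3 : 0 ≤ y / (1 + y ^ 2) ^ 2 := by positivity
  have h4 : critFn y = Real.pi / 2 - Real.arctan y - y / (1 + y ^ 2) - y / (1 + y ^ 2) ^ 2 := rfl
  linarith

/-- A zero of `critFn` in `[0, √3]` is a global maximiser of `reducedSpeed` on `[0, ∞)`. -/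
lemma reducedSpeed_le {s₀ : ℝ} (h0 : 0 ≤ s₀) (h3 : s₀ ≤ Real.sqrt 3) (hz : critFn s₀ = 0)
    {s : ℝ} (hs : 0 ≤ s) : reducedSpeed s ≤ reducedSpeed s₀ := by
  have hcont : Continuous reducedSpeed :=
    continuous_iff_continuousAt.2 fun x => (hasDerivAt_reducedSpeed x).continuousAt
  rcases le_total s s₀ with hle | hle
  · have hmono : MonotoneOn reducedSpeed (Set.Icc 0 s₀) := by
      refine monotoneOn_of_hasDerivWithinAt_nonneg (convex_Icc _ _) hcont.continuousOn
        (fun x _ => (hasDerivAt_reducedSpeed x).hasDerivWithinAt) fun x hx => ?_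
      rw [interior_Icc] at hx
      have := antitoneOn_critFn ⟨hx.1.le, hx.2.le.trans h3⟩ ⟨h0, h3⟩ hx.2.le
      rw [hz] at this
      have := hx.1
      positivity
    exact hmono ⟨hs, hle⟩ ⟨h0, le_rfl⟩ hle
  · have hanti : AntitoneOn reducedSpeed (Set.Ici s₀) := by
      refine antitoneOn_of_hasDerivWithinAt_nonpos (convex_Ici _) hcont.continuousOn
        (fun x _ => (hasDerivAt_reducedSpeed x).hasDerivWithinAt) fun x hx => ?_
      rw [interior_Ici] at hx
      have hx' : s₀ < x := hx
      have hk : critFn x ≤ 0 := by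
        rcases le_total x (Real.sqrt 3) with hx3 | hx3
        · rw [← hz]
          exact antitoneOn_critFn ⟨h0, h3⟩ ⟨h0.trans hx'.le, hx3⟩ hx'.le
        · exact critFn_nonpos_of_sqrt_three_le hx3
      exact mul_nonpos_of_nonneg_of_nonpos (by linarith) hk
    exact hanti (Set.mem_Ici.2 le_rfl) (Set.mem_Ici.2 hle) hle

/-! ### Numerical bounds -/

lemma arctan_lower {x : ℝ} (hx : 0 ≤ x) : x - x ^ 3 / 3 ≤ Real.arctan x := by
  have hd (y : ℝ) : HasDerivAt (fun z => Real.arctan z - (z - z ^ 3 / 3))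
      (y ^ 4 / (1 + y ^ 2)) y := by
    have hne : (1 + y ^ 2) ≠ 0 := by positivity
    refine ((Real.hasDerivAt_arctan y).sub
      ((hasDerivAt_id y).sub ((hasDerivAt_pow 3 y).div_const 3))).congr_deriv ?_
    field_simp
    ring
  have hm : Monotone (fun z => Real.arctan z - (z - z ^ 3 / 3)) :=
    monotone_of_hasDerivAt_nonneg hd fun y => by positivity
  have := hm hx
  simp at this
  linarith

lemma arctan_upper {x : ℝ} (hx : 0 ≤ x) : Real.arctan x ≤ x - x ^ 3 / 3 + x ^ 5 / 5 := by
  have hd (y : ℝ) : HasDerivAt (fun z => (z - z ^ 3 / 3 + z ^ 5 / 5) - Real.arctan z)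
      (y ^ 6 / (1 + y ^ 2)) y := by
    have hne : (1 + y ^ 2) ≠ 0 := by positivity
    refine ((((hasDerivAt_id y).sub ((hasDerivAt_pow 3 y).div_const 3)).add
      ((hasDerivAt_pow 5 y).div_const 5)).sub (Real.hasDerivAt_arctan y)).congr_deriv ?_
    field_simp
    ring
  have hm : Monotone (fun z => (z - z ^ 3 / 3 + z ^ 5 / 5) - Real.arctan z) :=
    monotone_of_hasDerivAt_nonneg hd fun y => by positivity
  have := hm hx
  simp at this
  linarith

/-- The addition formula with `arctan 1 = π/4` moves the argument close to `0`, where the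
Taylor bounds are sharp. -/
lemma arctan_eq_shift {s : ℝ} (hs : 0 < s) :
    Real.arctan s = Real.pi / 4 + Real.arctan ((s - 1) / (s + 1)) := by
  have hlt : 1 * ((s - 1) / (s + 1)) < 1 := by
    rw [one_mul, div_lt_one (by linarith)]
    linarith
  rw [← Real.arctan_one, Real.arctan_add hlt]
  congr 1
  have : s + 1 ≠ 0 := by positivity
  have h2 : 1 - 1 * ((s - 1) / (s + 1)) = 2 / (s + 1) := by
    field_simp
    ring
  rw [h2]
  field_simp
  ring

lemma arctan_bounds_left :
    Real.pi / 4 + 0.095262 ≤ Real.arctan 1.2113 ∧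
      Real.arctan 1.2113 ≤ Real.pi / 4 + 0.095268 := by
  rw [arctan_eq_shift (by norm_num)]
  have h0 : (0 : ℝ) ≤ (1.2113 - 1) / (1.2113 + 1) := by norm_num
  have h1 := arctan_lower h0
  have h2 := arctan_upper h0
  norm_num at h1 h2 ⊢
  constructor <;> linarith

lemma arctan_bounds_right :
    Real.pi / 4 + 0.096395 ≤ Real.arctan 1.2141 ∧
      Real.arctan 1.2141 ≤ Real.pi / 4 + 0.096401 := by
  rw [arctan_eq_shift (by norm_num)]
  have h0 : (0 : ℝ) ≤ (1.2141 - 1) / (1.2141 + 1) := by norm_num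
  have h1 := arctan_lower h0
  have h2 := arctan_upper h0
  norm_num at h1 h2 ⊢
  constructor <;> linarith

lemma exists_critFn_zero : ∃ s ∈ Set.Icc (1.2113 : ℝ) 1.2141, critFn s = 0 := by
  have hl : 0 ≤ critFn 1.2113 := by
    have h1 := arctan_bounds_left.2
    have h2 := Real.pi_gt_d6
    unfold critFn
    norm_num at h1 h2 ⊢
    linarith
  have hr : critFn 1.2141 ≤ 0 := by
    have h1 := arctan_bounds_right.1
    have h2 := Real.pi_lt_d6
    unfold critFn
    norm_num at h1 h2 ⊢
    linarith
  exact intermediate_value_Icc' (by norm_num) continuous_critFn.continuousOn ⟨hr, hl⟩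

lemma rate_mem {s : ℝ} (hs : s ∈ Set.Icc (1.2113 : ℝ) 1.2141) :
    4 * (1 / 4 - Real.arctan s / (2 * Real.pi)) ∈ Set.Icc (0.4385 : ℝ) 0.4395 := by
  have h1 := arctan_bounds_left.1.trans (Real.arctan_strictMono.monotone hs.1)
  have h2 := (Real.arctan_strictMono.monotone hs.2).trans arctan_bounds_right.2
  have hp1 := Real.pi_gt_d6
  have hp2 := Real.pi_lt_d6
  have hpi := Real.pi_pos
  have hq : 4 * (1 / 4 - Real.arctan s / (2 * Real.pi)) = 1 - 2 * Real.arctan s / Real.pi := by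
    field_simp
    ring
  have hl : 0.5605 ≤ 2 * Real.arctan s / Real.pi := by
    rw [le_div_iff₀ hpi]
    norm_num at *
    linarith
  have hu : 2 * Real.arctan s / Real.pi ≤ 0.5615 := by
    rw [div_le_iff₀ hpi]
    norm_num at *
    linarith
  rw [hq]
  constructor
  · norm_num at *
    linarith
  · norm_num at *
    linarith

/-! ### Optimal scaling -/

lemma neg_mul_div_sqrt_two (ℓ u : ℝ) :
    -(ℓ * u) / Real.sqrt 2 = -(ℓ / Real.sqrt 2 * u) := by
  ring

lemma tmcmcDepSpeed_eq (ℓ : ℝ) :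
    tmcmcDepSpeed ℓ = 4 / Real.pi * reducedSpeed (ℓ / Real.sqrt 2) := by
  have hb : betaFn ℓ = 4 * mixedMoment 2 (ℓ / Real.sqrt 2) := by
    simp only [betaFn, mixedMoment, neg_mul_div_sqrt_two]
  have hsq : ℓ ^ 2 = 2 * (ℓ / Real.sqrt 2) ^ 2 := by
    rw [div_pow, Real.sq_sqrt (by norm_num)]
    ring
  rw [tmcmcDepSpeed, hb, mixedMoment_two_eq, reducedSpeed, hsq]
  have hpi := Real.pi_ne_zero
  generalize ℓ / Real.sqrt 2 = s
  generalize Real.pi / 2 - Real.arctan s - s / (1 + s ^ 2) = h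
  field_simp

/-- **Corollary 5 (dependent set-up).** There is a maximizer `ℓ_opt ∈ [1.713, 1.717]`
(namely `ℓ_opt = 2.426/√2 = 1.715` to three decimals) of `g(ℓ) = ℓ²β(ℓ)` over `(0,∞)`, and
at this maximizer the acceptance rate `4∫₀^∞ Φ(−ℓ_opt u/√2)φ(u)du` lies in
`[0.4385, 0.4395]`. -/
theorem tmcmc_dependent_optimal_scaling :
    ∃ ℓ : ℝ, ℓ ∈ Set.Icc (1.713 : ℝ) 1.717 ∧
      (∀ ℓ' : ℝ, 0 < ℓ' → tmcmcDepSpeed ℓ' ≤ tmcmcDepSpeed ℓ) ∧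
      (4 * ∫ u in Set.Ioi (0 : ℝ),
          stdNormalCDF (-(ℓ * u) / Real.sqrt 2) * stdNormalPDF u)
        ∈ Set.Icc (0.4385 : ℝ) 0.4395 := by
  obtain ⟨s, hs, hz⟩ := exists_critFn_zero
  have h2 : (0 : ℝ) < Real.sqrt 2 := by positivity
  have hs0 : (0 : ℝ) ≤ s := le_trans (by norm_num) hs.1
  have hs3 : s ≤ Real.sqrt 3 := hs.2.trans (Real.le_sqrt_of_sq_le (by norm_num))
  have hdiv : s * Real.sqrt 2 / Real.sqrt 2 = s := mul_div_cancel_right₀ s h2.ne'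
  refine ⟨s * Real.sqrt 2, ⟨?_, ?_⟩, fun ℓ' hℓ' => ?_, ?_⟩
  · have h : (1.4142 : ℝ) ≤ Real.sqrt 2 := Real.le_sqrt_of_sq_le (by norm_num)
    calc (1.713 : ℝ) ≤ 1.2113 * 1.4142 := by norm_num
      _ ≤ s * Real.sqrt 2 := mul_le_mul hs.1 h (by norm_num) hs0
  · have h : Real.sqrt 2 ≤ 1.414214 := Real.sqrt_le_iff.2 ⟨by norm_num, by norm_num⟩
    calc s * Real.sqrt 2 ≤ 1.2141 * 1.414214 := mul_le_mul hs.2 h h2.le (by norm_num)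
      _ ≤ 1.717 := by norm_num
  · rw [tmcmcDepSpeed_eq, tmcmcDepSpeed_eq, hdiv]
    exact mul_le_mul_of_nonneg_left (reducedSpeed_le hs0 hs3 hz (by positivity)) (by positivity)
  · have hA : (∫ u in Set.Ioi (0 : ℝ),
        stdNormalCDF (-(s * Real.sqrt 2 * u) / Real.sqrt 2) * stdNormalPDF u) =
        mixedMoment 0 s := by
      simp only [mixedMoment, neg_mul_div_sqrt_two, hdiv, pow_zero, one_mul]
    rw [hA, mixedMoment_zero_eq]
    exact rate_mem hs
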